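/- arXiv:2503.02243 — 2 statements merged into one kernel-verified Lean document; each statement's English description precedes it below -/
import Mathlib

section
/- For every integer n ≥ 1 and every x ≥ 0, B̃_n(t;x) = (ξ'(p_n(x))/ξ(p_n(x)))·x + (1/n)·[ S'(1)/S(1) + V'(1)·ξ'(p_n(x))/ξ(p_n(x)) ], where B̃_n(t;x) denotes the operator applied to the identity function t ↦ t. -/
open Real MeasureTheory Filter Topology

/-- `p_n(x) = n² x² T(1) + n x U(1) + V(1)`. -/
noncomputable def pnx (T U V : ℝ → ℝ) (n : ℕ) (x : ℝ) : ℝ :=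
  (n : ℝ) ^ 2 * x ^ 2 * T 1 + (n : ℝ) * x * U 1 + V 1

/-- The Euler Beta function value `B(j, n+1) = Γ(j)Γ(n+1)/Γ(j+n+1)`. -/
noncomputable def betaB (j n : ℕ) : ℝ :=
  Real.Gamma (j : ℝ) * Real.Gamma ((n : ℝ) + 1) / Real.Gamma ((j : ℝ) + (n : ℝ) + 1)

/-- The Baskakov–Durrmeyer type operator `B̃_n(f;x)`. -/
noncomputable def BDop (ξ S T U V : ℝ → ℝ) (Θ : ℕ → ℝ → ℝ) (n : ℕ) (f : ℝ → ℝ) (x : ℝ) : ℝ :=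
  (S 1 * ξ (pnx T U V n x))⁻¹ *
    (Θ 0 ((n : ℝ) * x) * f 0 +
      ∑' j : ℕ, (Θ (j + 1) ((n : ℝ) * x) / betaB (j + 1) n) *
        ∫ s in Set.Ioi (0 : ℝ), s ^ j * (1 + s) ^ (-((n : ℝ) + (j : ℝ) + 2)) * f s)


/-- Termwise differentiation of a power series. -/
lemma ps_deriv (ρ : ℝ) (a : ℕ → ℝ) (F : ℝ → ℝ)
    (h : ∀ s ∈ Set.Ioo (-ρ) ρ, HasSum (fun j : ℕ => a j * s ^ j) (F s))
    (t : ℝ) (ht : |t| < ρ) :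
    ∃ d, HasDerivAt F d t ∧ HasSum (fun j : ℕ => a j * ((j : ℝ) * t ^ (j - 1))) d := by
  obtain ⟨r1, h1, h1'⟩ := exists_between ht
  obtain ⟨r2, h2, h2'⟩ := exists_between h1'
  have ht0 := abs_nonneg t
  have hr1 : 0 < r1 := by linarith
  have hr2 : 0 < r2 := by linarith
  have hs2 := (h r2 ⟨by linarith, h2'⟩).summable
  obtain ⟨C, hC⟩ : ∃ C, ∀ j, |a j * r2 ^ j| ≤ C := by
    obtain ⟨C, hC⟩ := (hs2.tendsto_atTop_zero.abs).bddAbove_range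
    exact ⟨C, fun j => hC ⟨j, rfl⟩⟩
  have hq : ‖r1 / r2‖ < 1 := by
    rw [Real.norm_of_nonneg (by positivity), div_lt_one hr2]; exact h2
  have hsum : Summable (fun j : ℕ => C / r1 * ((j : ℝ) ^ 1 * (r1 / r2) ^ j)) :=
    (summable_pow_mul_geometric_of_norm_lt_one 1 hq).mul_left _
  have hb : ∀ (j : ℕ) (y : ℝ), y ∈ Set.Ioo (-r1) r1 →
      ‖a j * ((j : ℝ) * y ^ (j - 1))‖ ≤ C / r1 * ((j : ℝ) ^ 1 * (r1 / r2) ^ j) := by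
    intro j y hy
    rcases j with _ | j
    · simp
    have hy' : |y| ≤ r1 := abs_le.2 ⟨hy.1.le, hy.2.le⟩
    have hCj := hC (j + 1)
    rw [abs_mul, abs_of_pos (pow_pos hr2 _)] at hCj
    have hp : |y| ^ j ≤ r1 ^ j := pow_le_pow_left₀ (abs_nonneg _) hy' _
    have e : C / r1 * ((((j + 1 : ℕ) : ℝ)) ^ 1 * (r1 / r2) ^ (j + 1))
        = C / r2 ^ (j + 1) * (((j + 1 : ℕ) : ℝ) * r1 ^ j) := by
      rw [div_pow]; field_simp; ring
    rw [e, Real.norm_eq_abs, abs_mul, abs_mul, abs_pow, Nat.abs_cast, Nat.add_sub_cancel]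
    have : |a (j + 1)| ≤ C / r2 ^ (j + 1) := by
      rw [le_div_iff₀ (by positivity)]; exact hCj
    have hC0 : 0 ≤ C / r2 ^ (j + 1) := (abs_nonneg _).trans this
    gcongr
  have htm : t ∈ Set.Ioo (-r1) r1 := abs_lt.1 h1
  have key := hasDerivAt_tsum_of_isPreconnected (g := fun (j : ℕ) (y : ℝ) => a j * y ^ j)
    (g' := fun (j : ℕ) (y : ℝ) => a j * ((j : ℝ) * y ^ (j - 1))) hsum isOpen_Ioo
    (isPreconnected_Ioo) (fun j y _ => (hasDerivAt_pow j y).const_mul (a j)) hb htm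
    (h t ⟨by linarith [htm.1], by linarith [htm.2]⟩).summable htm
  refine ⟨_, ?_, (Summable.of_norm_bounded hsum (fun j => hb j t htm)).hasSum⟩
  refine key.congr_of_eventuallyEq ?_
  filter_upwards [isOpen_Ioo.mem_nhds htm] with y hy
  exact (h y ⟨by linarith [hy.1], by linarith [hy.2]⟩).tsum_eq.symm

lemma ps_deriv_shift (ρ : ℝ) (hρ : 1 < ρ) (m : ℕ) (a : ℕ → ℝ) (F : ℝ → ℝ)
    (h : ∀ s ∈ Set.Ioo (-ρ) ρ, HasSum (fun j : ℕ => a j * s ^ (j + m)) (F s)) :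
    HasDerivAt F (deriv F 1) 1 := by
  obtain ⟨d, hd, -⟩ := ps_deriv ρ (fun j => if j < m then 0 else a (j - m)) F (by
    intro s hs
    rw [← hasSum_nat_add_iff' m]
    have e1 : ∑ i ∈ Finset.range m, (if i < m then 0 else a (i - m)) * s ^ i = 0 := by
      refine Finset.sum_eq_zero ?_
      intro i hi
      simp [Finset.mem_range.1 hi]
    rw [e1, sub_zero]
    simpa using h s hs) 1 (by simpa using hρ)
  exact hd.differentiableAt.hasDerivAt

lemma tend_aux (n : ℕ) (hn : 1 ≤ n) (k : ℕ) :
    Tendsto (fun s : ℝ => s ^ k * ((1 + s) ^ (k + n))⁻¹) atTop (𝓝 0) := by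
  have h1 : Tendsto (fun s : ℝ => (1 + s)⁻¹) atTop (𝓝 0) :=
    tendsto_inv_atTop_zero.comp (tendsto_atTop_add_const_left _ _ tendsto_id)
  refine squeeze_zero' ?_ ?_ h1
  · filter_upwards [eventually_ge_atTop 0] with s hs
    positivity
  · filter_upwards [eventually_ge_atTop 0] with s hs
    have : s ^ k * (1 + s) ≤ (1 + s) ^ (k + n) := by
      calc s ^ k * (1 + s) ≤ (1 + s) ^ k * (1 + s) ^ n := by
            gcongr
            · linarith
            · exact le_self_pow₀ (by linarith) (by omega)
        _ = _ := (pow_add _ _ _).symm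
    rw [← div_eq_mul_inv, inv_eq_one_div, div_le_div_iff₀ (by positivity) (by positivity)]
    linarith

lemma der_aux (k N : ℕ) (s : ℝ) (hs : 0 ≤ s) :
    HasDerivAt (fun s : ℝ => s ^ k * ((1 + s) ^ N)⁻¹)
      (k * (s ^ (k - 1) * ((1 + s) ^ N)⁻¹) - N * (s ^ k * ((1 + s) ^ (N + 1))⁻¹)) s := by
  have h0 : (1 + s) ≠ 0 := by positivity
  have h2 : HasDerivAt (fun s : ℝ => (1 + s) ^ N) (N * (1 + s) ^ (N - 1) * 1) s :=
    ((hasDerivAt_id' s).const_add 1).fun_pow N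
  have h3 := (hasDerivAt_pow k s).mul (h2.fun_inv (pow_ne_zero N h0))
  refine h3.congr_deriv ?_
  rcases N with _ | N
  · simp
  · simp only [Nat.add_sub_cancel]
    field_simp
    ring

lemma beta_aux (n : ℕ) (hn : 1 ≤ n) (k : ℕ) :
    IntegrableOn (fun s : ℝ => s ^ k * ((1 + s) ^ (k + n + 1))⁻¹) (Set.Ioi 0) ∧
    ∫ s in Set.Ioi (0 : ℝ), s ^ k * ((1 + s) ^ (k + n + 1))⁻¹
      = (k.factorial : ℝ) * ((n - 1).factorial : ℝ) / ((k + n).factorial : ℝ) := by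
  have hn0 : (n : ℝ) ≠ 0 := by positivity
  induction k with
  | zero =>
    have hd : ∀ s ∈ Set.Ici (0 : ℝ),
        HasDerivAt (fun s : ℝ => -(n : ℝ)⁻¹ * (s ^ 0 * ((1 + s) ^ (0 + n))⁻¹))
          (s ^ 0 * ((1 + s) ^ (0 + n + 1))⁻¹) s := by
      intro s hs
      refine ((der_aux 0 (0 + n) s hs).const_mul (-(n : ℝ)⁻¹)).congr_deriv ?_
      simp
      field_simp
    have hlim := (tend_aux n hn 0).const_mul (-(n : ℝ)⁻¹)
    have hpos : ∀ s ∈ Set.Ioi (0 : ℝ), 0 ≤ s ^ 0 * ((1 + s) ^ (0 + n + 1))⁻¹ := by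
      intro s hs
      have : 0 < s := hs
      positivity
    refine ⟨integrableOn_Ioi_deriv_of_nonneg' hd hpos hlim, ?_⟩
    rw [integral_Ioi_of_hasDerivAt_of_nonneg' hd hpos hlim]
    obtain ⟨m, rfl⟩ : ∃ m, n = m + 1 := ⟨n - 1, by omega⟩
    simp [Nat.factorial_succ]
    field_simp
  | succ k ih =>
    obtain ⟨hi, hv⟩ := ih
    have hI : IntegrableOn (fun s : ℝ => s ^ (k + 1) * ((1 + s) ^ (k + 1 + n + 1))⁻¹)
        (Set.Ioi 0) := by
      refine Integrable.mono' hi (Measurable.aestronglyMeasurable (by fun_prop)) ?_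
      filter_upwards [ae_restrict_mem measurableSet_Ioi] with s hs
      have hs : 0 < s := hs
      rw [Real.norm_of_nonneg (by positivity), ← div_eq_mul_inv, ← div_eq_mul_inv,
        div_le_div_iff₀ (by positivity) (by positivity)]
      have : 0 < s ^ k * (1 + s) ^ (k + n + 1) := by positivity
      have e1 : s ^ (k + 1) * (1 + s) ^ (k + n + 1) = s ^ k * (1 + s) ^ (k + n + 1) * s := by ring
      have e2 : s ^ k * (1 + s) ^ (k + 1 + n + 1) = s ^ k * (1 + s) ^ (k + n + 1) * (1 + s) := by
        ring
      rw [e1, e2]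
      gcongr
      linarith
    refine ⟨hI, ?_⟩
    have hi' : IntegrableOn (fun s : ℝ => s ^ k * ((1 + s) ^ (k + 1 + n))⁻¹) (Set.Ioi 0) := by
      rw [show k + 1 + n = k + n + 1 by ring]; exact hi
    have hv' : ∫ s in Set.Ioi (0 : ℝ), s ^ k * ((1 + s) ^ (k + 1 + n))⁻¹
      = (k.factorial : ℝ) * ((n - 1).factorial : ℝ) / ((k + n).factorial : ℝ) := by
      rw [show k + 1 + n = k + n + 1 by ring]; exact hv
    have A := hi'.const_mul ((k + 1 : ℕ) : ℝ)
    have B := hI.const_mul ((k + 1 + n : ℕ) : ℝ)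
    have key := integral_Ioi_of_hasDerivAt_of_tendsto' (a := 0)
      (fun s hs => der_aux (k + 1) (k + 1 + n) s hs) (A.sub B) (tend_aux n hn (k + 1))
    simp only [Nat.add_sub_cancel] at key
    rw [integral_sub A B, integral_const_mul, integral_const_mul, hv'] at key
    rw [show k + 1 + n = (k + n) + 1 by ring] at key ⊢
    rw [Nat.factorial_succ (k + n), Nat.factorial_succ k]
    have f0 : ((k + n).factorial : ℝ) ≠ 0 := by positivity
    have f1 : ((k + n + 1 : ℕ) : ℝ) ≠ 0 := by positivity
    simp only [Nat.cast_mul]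
    rw [eq_div_iff (mul_ne_zero f1 f0)]
    simp only [Nat.succ_ne_zero, ne_eq, not_false_eq_true, zero_pow, zero_mul, sub_zero] at key
    generalize (∫ s in Set.Ioi (0 : ℝ), s ^ (k + 1) * ((1 + s) ^ (k + n + 1 + 1))⁻¹) = J at key ⊢
    field_simp at key
    linarith

lemma term_aux (n : ℕ) (hn : 1 ≤ n) (j : ℕ) (c : ℝ) :
    c / betaB (j + 1) n *
        ∫ s in Set.Ioi (0 : ℝ), s ^ j * (1 + s) ^ (-((n : ℝ) + (j : ℝ) + 2)) * s
      = (1 / (n : ℝ)) * (c * ((j + 1 : ℕ) : ℝ)) := by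
  have e : ∫ s in Set.Ioi (0 : ℝ), s ^ j * (1 + s) ^ (-((n : ℝ) + (j : ℝ) + 2)) * s
      = ∫ s in Set.Ioi (0 : ℝ), s ^ (j + 1) * ((1 + s) ^ (j + 1 + n + 1))⁻¹ := by
    refine setIntegral_congr_fun measurableSet_Ioi ?_
    intro s hs
    have hs : 0 < s := hs
    have : (1 + s) ^ (-((n : ℝ) + (j : ℝ) + 2)) = ((1 + s) ^ (j + 1 + n + 1))⁻¹ := by
      rw [Real.rpow_neg (by positivity), ← Real.rpow_natCast]
      congr 2
      push_cast; ring
    simp only [this]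
    ring
  rw [e, (beta_aux n hn (j + 1)).2]
  have b : betaB (j + 1) n = (j.factorial : ℝ) * (n.factorial : ℝ) / ((j + 1 + n).factorial : ℝ) := by
    unfold betaB
    rw [Real.Gamma_nat_eq_factorial n]
    have h1 := Real.Gamma_nat_eq_factorial j
    have h2 := Real.Gamma_nat_eq_factorial (j + 1 + n)
    push_cast at h1 h2 ⊢
    rw [h1, h2]
  obtain ⟨m, rfl⟩ : ∃ m, n = m + 1 := ⟨n - 1, by omega⟩
  rw [b, Nat.factorial_succ j, Nat.factorial_succ m, Nat.add_sub_cancel]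
  push_cast
  have f0 : ((j + 1 + (m + 1)).factorial : ℝ) ≠ 0 := by positivity
  have f1 : (m.factorial : ℝ) ≠ 0 := by positivity
  have f2 : (j.factorial : ℝ) ≠ 0 := by positivity
  field_simp

theorem stmt4
    (ρ : ℝ) (hρ : 1 < ρ)
    (ξ S T U V : ℝ → ℝ) (Θ : ℕ → ℝ → ℝ)
    (p q r u v : ℕ → ℝ)
    (hξser : ∀ t : ℝ, HasSum (fun j : ℕ => p j * t ^ j) (ξ t))
    (hξnn : ∀ t : ℝ, 0 ≤ ξ t)
    (hSser : ∀ s ∈ Set.Ioo (-ρ) ρ, HasSum (fun j : ℕ => q j * s ^ j) (S s))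
    (hTser : ∀ s ∈ Set.Ioo (-ρ) ρ, HasSum (fun j : ℕ => r j * s ^ (j + 1)) (T s))
    (hUser : ∀ s ∈ Set.Ioo (-ρ) ρ, HasSum (fun j : ℕ => u j * s ^ (j + 2)) (U s))
    (hVser : ∀ s ∈ Set.Ioo (-ρ) ρ, HasSum (fun j : ℕ => v j * s ^ (j + 3)) (V s))
    (hS1 : 0 < S 1)
    (hT'1 : deriv T 1 = 0) (hT''1 : deriv (deriv T) 1 = 0) (hU'1 : deriv U 1 = 1)
    (hΘnn : ∀ (j : ℕ) (y : ℝ), 0 ≤ y → 0 ≤ Θ j y)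
    (hgen : ∀ y : ℝ, 0 ≤ y → ∀ s ∈ Set.Ioo (-ρ) ρ,
      HasSum (fun j : ℕ => Θ j y * s ^ j) (S s * ξ (y ^ 2 * T s + y * U s + V s)))
    (hξp : ∀ (m : ℕ), 1 ≤ m → ∀ y : ℝ, 0 ≤ y → 0 < ξ (pnx T U V m y))
    (n : ℕ) (hn : 1 ≤ n) (x : ℝ) (hx : 0 ≤ x) :
    BDop ξ S T U V Θ n (fun t => t) x =
      deriv ξ (pnx T U V n x) / ξ (pnx T U V n x) * x +
        (1 / (n : ℝ)) * (deriv S 1 / S 1 +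
          deriv V 1 * (deriv ξ (pnx T U V n x) / ξ (pnx T U V n x))) := by
  have hn0 : (n : ℝ) ≠ 0 := by positivity
  have hξ0 := hξp n hn x hx
  have hy : 0 ≤ (n : ℝ) * x := by positivity
  have hS := ps_deriv_shift ρ hρ 0 q S (by simpa using hSser)
  have hT := ps_deriv_shift ρ hρ 1 r T hTser
  have hU := ps_deriv_shift ρ hρ 2 u U hUser
  have hV := ps_deriv_shift ρ hρ 3 v V hVser
  have hP : ((n : ℝ) * x) ^ 2 * T 1 + (n : ℝ) * x * U 1 + V 1 = pnx T U V n x := by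
    unfold pnx; ring
  obtain ⟨d', hd', -⟩ := ps_deriv (|pnx T U V n x| + 1) p ξ (fun s _ => hξser s)
    (pnx T U V n x) (by linarith)
  have hξ := hd'.differentiableAt.hasDerivAt
  have hin : HasDerivAt (fun s => ((n : ℝ) * x) ^ 2 * T s + (n : ℝ) * x * U s + V s)
      (((n : ℝ) * x) ^ 2 * deriv T 1 + (n : ℝ) * x * deriv U 1 + deriv V 1) 1 :=
    ((hT.const_mul _).add (hU.const_mul _)).add hV
  rw [← hP] at hξ
  have hG := hS.mul (HasDerivAt.comp (1 : ℝ) hξ hin)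
  obtain ⟨d, hd, hsum⟩ := ps_deriv ρ (fun j => Θ j ((n : ℝ) * x)) _ (hgen _ hy) 1
    (by simpa using hρ)
  have hdd := hd.unique hG
  rw [← hasSum_nat_add_iff' 1] at hsum
  have hts := hsum.mul_left (1 / (n : ℝ))
  unfold BDop
  simp only [term_aux n hn]
  have : ∑' j : ℕ, (1 / (n : ℝ)) * (Θ (j + 1) ((n : ℝ) * x) * ((j + 1 : ℕ) : ℝ))
      = 1 / (n : ℝ) * d := by
    simpa using hts.tsum_eq
  rw [this, hdd]
  simp only [Function.comp, hP, hT'1, hU'1]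
  field_simp
  ring
end

section
/- Let 0 < r ≤ 1 and let f:[0,∞)→ℝ be a continuous function of at most polynomial growth belonging to the Lipschitz-type class Lip*_K, i.e. |f(s) − f(x)| ≤ K·|s−x|^r/(s+x)^{r/2} for all x ∈ (0,∞) and s ∈ [0,∞). Then for every x > 0 and every integer n ≥ 2, |B̃_n(f;x) − f(x)| ≤ (K/x^{r/2})·( B̃_n((t−x)²;x) )^{r/2}, where B̃_n((t−x)²;x) denotes the operator applied to t ↦ (t−x)². -/
open Real MeasureTheory Filter Topology

lemma aux_sum (t F m : ℕ → ℝ) (t0 F0 m0 y A B Z : ℝ) (ht : ∀ j, 0 ≤ t j) (ht0 : 0 ≤ t0)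
    (hZ : 0 < Z) (hs : HasSum t (Z - t0)) (hm : Summable fun j => t j * m j)
    (hF0 : |F0 - y| ≤ A + B * m0) (hF : ∀ j, |F j - y| ≤ A + B * m j) :
    |Z⁻¹ * (t0 * F0 + ∑' j, t j * F j) - y| ≤ A + B * (Z⁻¹ * (t0 * m0 + ∑' j, t j * m j)) := by
  have hb : HasSum (fun j => t j * (A + B * m j)) ((Z - t0) * A + B * ∑' j, t j * m j) := by
    have h := (hs.mul_right A).add (hm.hasSum.mul_left B)
    have e : (fun j => t j * (A + B * m j)) = fun j => t j * A + B * (t j * m j) := by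
      funext j; ring
    rw [e]; exact h
  have hle : ∀ j, ‖t j * (F j - y)‖ ≤ t j * (A + B * m j) := by
    intro j
    rw [norm_mul, Real.norm_eq_abs, Real.norm_eq_abs, abs_of_nonneg (ht j)]
    exact mul_le_mul_of_nonneg_left (hF j) (ht j)
  have hd : Summable fun j => t j * (F j - y) := Summable.of_norm_bounded hb.summable hle
  have hn : |∑' j, t j * (F j - y)| ≤ (Z - t0) * A + B * ∑' j, t j * m j :=
    tsum_of_norm_bounded hb hle
  have he : HasSum (fun j => t j * F j) (∑' j, t j * (F j - y) + (Z - t0) * y) := by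
    have := hd.hasSum.add (hs.mul_right y)
    convert this using 2
    ring
  rw [he.tsum_eq]
  have e1 : Z⁻¹ * (t0 * F0 + (∑' j, t j * (F j - y) + (Z - t0) * y)) - y
      = Z⁻¹ * (t0 * (F0 - y) + ∑' j, t j * (F j - y)) := by
    field_simp; ring
  have e2 : A + B * (Z⁻¹ * (t0 * m0 + ∑' j, t j * m j))
      = Z⁻¹ * (t0 * (A + B * m0) + ((Z - t0) * A + B * ∑' j, t j * m j)) := by
    field_simp; ring
  rw [e1, e2, abs_mul, abs_of_pos (inv_pos.2 hZ)]
  refine mul_le_mul_of_nonneg_left ?_ (inv_pos.2 hZ).le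
  refine (abs_add_le _ _).trans (add_le_add ?_ hn)
  rw [abs_mul, abs_of_nonneg ht0]
  exact mul_le_mul_of_nonneg_left hF0 ht0

lemma aux_tangent (α δ y : ℝ) (h0 : 0 ≤ α) (h1 : α ≤ 1) (hδ : 0 < δ) (hy : 0 ≤ y) :
    y ^ α ≤ (1 - α) * δ ^ α + α * δ ^ α / δ * y := by
  have h := rpow_one_add_le_one_add_mul_self (s := y / δ - 1)
    (by have : 0 ≤ y / δ := by positivity
        linarith) h0 h1
  have e : y ^ α = δ ^ α * (1 + (y / δ - 1)) ^ α := by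
    rw [← Real.mul_rpow hδ.le (by ring_nf; positivity)]
    congr 1; field_simp; ring
  rw [e]
  have := mul_le_mul_of_nonneg_left h (Real.rpow_nonneg hδ.le α)
  refine this.trans (le_of_eq ?_)
  field_simp; ring

lemma aux_le (k : ℕ) (a s : ℝ) (hs : 0 ≤ s) :
    s ^ k * (1 + s) ^ (-a) ≤ (s + 1) ^ ((k : ℝ) - a) := by
  have h1 : (0:ℝ) < s + 1 := by linarith
  rw [sub_eq_add_neg, Real.rpow_add h1, Real.rpow_natCast, add_comm 1 s]
  gcongr
  linarith

lemma aux_integrable (j : ℕ) (a : ℝ) (h : (j : ℝ) + 1 < a) :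
    IntegrableOn (fun s : ℝ => s ^ j * (1 + s) ^ (-a)) (Set.Ioi 0) := by
  have h1 : IntegrableOn (fun s : ℝ => (s + 1) ^ ((j : ℝ) - a)) (Set.Ioi 0) :=
    integrableOn_add_rpow_Ioi_of_lt (by linarith) (by norm_num)
  refine Integrable.mono' h1 ?_ ?_
  · exact Measurable.aestronglyMeasurable (by fun_prop)
  · refine (ae_restrict_iff' measurableSet_Ioi).2 (Eventually.of_forall fun s hs => ?_)
    have hs' : (0:ℝ) < s := hs
    rw [Real.norm_of_nonneg (by positivity)]
    exact aux_le j a s hs'.le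

lemma aux_tendsto (k : ℕ) (a : ℝ) (h : (k : ℝ) < a) :
    Tendsto (fun s : ℝ => s ^ k * (1 + s) ^ (-a)) atTop (𝓝 0) := by
  have h2 : Tendsto (fun s : ℝ => (s + 1) ^ ((k : ℝ) - a)) atTop (𝓝 0) := by
    have := (tendsto_rpow_neg_atTop (y := a - k) (by linarith)).comp
      (tendsto_atTop_add_const_right atTop (1:ℝ) tendsto_id)
    simpa [Function.comp_def] using this
  refine tendsto_of_tendsto_of_tendsto_of_le_of_le' tendsto_const_nhds h2 ?_ ?_
  · filter_upwards [eventually_ge_atTop (0:ℝ)] with s hs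
    positivity
  · filter_upwards [eventually_ge_atTop (0:ℝ)] with s hs
    exact aux_le k a s hs

lemma aux_deriv (k : ℕ) (a s : ℝ) (hs : 0 ≤ s) :
    HasDerivAt (fun s : ℝ => s ^ k * (1 + s) ^ (-a))
      ((k : ℝ) * s ^ (k - 1) * (1 + s) ^ (-a) + s ^ k * (-a * (1 + s) ^ (-a - 1))) s := by
  have h1 := hasDerivAt_pow k s
  have h2 : HasDerivAt (fun s : ℝ => (1 + s) ^ (-a)) (-a * (1 + s) ^ (-a - 1)) s := by
    have := ((hasDerivAt_id s).const_add 1).rpow_const (p := -a) (Or.inl (by simp; linarith))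
    simpa using this
  exact h1.mul h2

lemma aux_value (j : ℕ) : ∀ (a : ℝ), (j : ℝ) + 1 < a →
    ∫ s in Set.Ioi (0:ℝ), s ^ j * (1 + s) ^ (-a)
      = Real.Gamma (j + 1) * Real.Gamma (a - j - 1) / Real.Gamma a := by
  induction j with
  | zero =>
    intro a ha
    simp only [Nat.cast_zero, zero_add] at ha
    have hi := aux_integrable 0 a (by simpa using ha)
    have hi2 : IntegrableOn (fun s : ℝ => ((0:ℕ) : ℝ) * s ^ (0 - 1) * (1 + s) ^ (-(a-1))
        + s ^ 0 * (-(a-1) * (1 + s) ^ (-(a-1) - 1))) (Set.Ioi 0) := by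
      refine (hi.const_mul (-(a-1))).congr (Eventually.of_forall fun s => ?_)
      have : -(a-1) - 1 = -a := by ring
      simp [this]
    have key := integral_Ioi_of_hasDerivAt_of_tendsto' (a := 0)
      (fun s hs => aux_deriv 0 (a-1) s hs) hi2 (aux_tendsto 0 (a-1) (by simpa using ha))
    have e : ∫ s in Set.Ioi (0:ℝ), (((0:ℕ) : ℝ) * s ^ (0 - 1) * (1 + s) ^ (-(a-1))
        + s ^ 0 * (-(a-1) * (1 + s) ^ (-(a-1) - 1)))
        = -(a-1) * ∫ s in Set.Ioi (0:ℝ), s ^ 0 * (1 + s) ^ (-a) := by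
      rw [← integral_const_mul]
      refine integral_congr_ae (Eventually.of_forall fun s => ?_)
      have : -(a-1) - 1 = -a := by ring
      simp [this]
    rw [e] at key
    have hg : Real.Gamma a = (a - 1) * Real.Gamma (a - 1) := by
      rw [← Real.Gamma_add_one (by linarith)]; congr 1; ring
    have hp : 0 < Real.Gamma (a - 1) := Real.Gamma_pos_of_pos (by linarith)
    have ha1 : a - 1 ≠ 0 := by linarith
    rw [hg]
    simp only [Nat.cast_zero, zero_add, Real.Gamma_one, sub_zero, one_mul]
    simp only [pow_zero, add_zero, Real.one_rpow, mul_one, zero_sub, one_mul] at key ⊢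
    field_simp
    linarith
  | succ j ih =>
    intro a ha
    push_cast at ha
    have hi := aux_integrable (j+1) a (by push_cast; linarith)
    have hj := aux_integrable j (a-1) (by linarith)
    have hfun : ∀ s : ℝ, ((j+1:ℕ) : ℝ) * s ^ (j + 1 - 1) * (1 + s) ^ (-(a-1))
        + s ^ (j+1) * (-(a-1) * (1 + s) ^ (-(a-1) - 1)) =
        ((j:ℝ)+1) * (s ^ j * (1 + s) ^ (-(a-1))) + (-(a-1)) * (s ^ (j+1) * (1 + s) ^ (-a)) := by
      intro s
      have : -(a-1) - 1 = -a := by ring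
      rw [this]; push_cast; ring
    have hint := (hj.const_mul ((j:ℝ)+1)).add (hi.const_mul (-(a-1)))
    have key := integral_Ioi_of_hasDerivAt_of_tendsto' (a := 0)
      (fun s hs => aux_deriv (j+1) (a-1) s hs)
      (hint.congr (Eventually.of_forall fun s => (hfun s).symm)) (aux_tendsto (j+1) (a-1) (by push_cast; linarith))
    simp_rw [hfun] at key
    rw [integral_add (hj.const_mul ((j:ℝ)+1)) (hi.const_mul (-(a-1))), integral_const_mul,
      integral_const_mul, ih (a-1) (by linarith)] at key
    have hg : Real.Gamma a = (a - 1) * Real.Gamma (a - 1) := by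
      rw [← Real.Gamma_add_one (by linarith)]; congr 1; ring
    have hp : 0 < Real.Gamma (a - 1) := Real.Gamma_pos_of_pos (by linarith)
    have hj0 : (0:ℝ) ≤ j := j.cast_nonneg
    have ha1 : a - 1 ≠ 0 := by linarith
    rw [hg, show ((j+1:ℕ):ℝ) + 1 = ((j:ℝ)+1) + 1 by push_cast; ring,
      Real.Gamma_add_one (by positivity : (j:ℝ)+1 ≠ 0),
      show a - ((j+1:ℕ):ℝ) - 1 = a - 1 - j - 1 by push_cast; ring]
    simp at key
    field_simp
    field_simp at key
    linarith

lemma aux_beta_pos (j n : ℕ) : 0 < betaB (j + 1) n := by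
  unfold betaB
  have h1 : (0:ℝ) < ((j+1:ℕ):ℝ) := by positivity
  have := Real.Gamma_pos_of_pos h1
  have := Real.Gamma_pos_of_pos (show (0:ℝ) < (n:ℝ) + 1 by positivity)
  have := Real.Gamma_pos_of_pos (show (0:ℝ) < ((j+1:ℕ):ℝ) + n + 1 by positivity)
  positivity

lemma aux_mass (j n : ℕ) :
    ∫ s in Set.Ioi (0:ℝ), s ^ j * (1 + s) ^ (-((n : ℝ) + (j : ℝ) + 2)) = betaB (j + 1) n := by
  rw [aux_value j _ (by have : (0:ℝ) ≤ n := n.cast_nonneg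
                        linarith)]
  unfold betaB
  push_cast
  congr 2
  · congr 1; ring
  · ring

lemma aux_second (j n : ℕ) (hn : 2 ≤ n) :
    ∫ s in Set.Ioi (0:ℝ), s ^ (j + 2) * (1 + s) ^ (-((n : ℝ) + (j : ℝ) + 2))
      = betaB (j + 1) n * (((j:ℝ) + 1) * (j + 2) / (n * (n - 1))) := by
  have hn' : (2:ℝ) ≤ n := by exact_mod_cast hn
  have hj0 : (0:ℝ) ≤ j := j.cast_nonneg
  rw [aux_value (j+2) _ (by push_cast; linarith)]
  unfold betaB
  push_cast
  rw [show (n:ℝ) + j + 2 - (j + 2) - 1 = n - 1 by ring,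
    show (j:ℝ) + 1 + n + 1 = n + j + 2 by ring,
    show (j:ℝ) + 2 + 1 = (j + 1 + 1) + 1 by ring,
    Real.Gamma_add_one (by positivity : (j:ℝ)+1+1 ≠ 0),
    Real.Gamma_add_one (by positivity : (j:ℝ)+1 ≠ 0),
    Real.Gamma_add_one (by positivity : (n:ℝ) ≠ 0),
    show Real.Gamma (n:ℝ) = ((n:ℝ) - 1) * Real.Gamma (n - 1) by
      rw [← Real.Gamma_add_one (by linarith)]; congr 1; ring]
  have : Real.Gamma ((n:ℝ) + j + 2) ≠ 0 := (Real.Gamma_pos_of_pos (by positivity)).ne'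
  have : (n:ℝ) - 1 ≠ 0 := by linarith
  have : (n:ℝ) ≠ 0 := by linarith
  field_simp
  ring

lemma aux_sq_int (j n : ℕ) (hn : 2 ≤ n) (x : ℝ) :
    IntegrableOn (fun s : ℝ => s ^ j * (1 + s) ^ (-((n : ℝ) + (j : ℝ) + 2)) * (s - x) ^ 2)
      (Set.Ioi 0) := by
  have hn' : (2:ℝ) ≤ n := by exact_mod_cast hn
  have i0 := aux_integrable j ((n : ℝ) + (j : ℝ) + 2) (by linarith)
  have i1 := aux_integrable (j+1) ((n : ℝ) + (j : ℝ) + 2) (by push_cast; linarith)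
  have i2 := aux_integrable (j+2) ((n : ℝ) + (j : ℝ) + 2) (by push_cast; linarith)
  refine ((i2.add (i1.const_mul (-2*x))).add (i0.const_mul (x^2))).congr
    (Eventually.of_forall fun s => ?_)
  simp only [Pi.add_apply]
  ring

lemma aux_sq_bound (j n : ℕ) (hn : 2 ≤ n) (x : ℝ) :
    (∫ s in Set.Ioi (0:ℝ), s ^ j * (1 + s) ^ (-((n : ℝ) + (j : ℝ) + 2)) * (s - x) ^ 2)
      / betaB (j + 1) n ≤ 2 * x ^ 2 + 4 * ((j + 1 : ℕ) : ℝ) ^ 2 := by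
  have hn' : (2:ℝ) ≤ n := by exact_mod_cast hn
  have hj0 : (0:ℝ) ≤ j := j.cast_nonneg
  have hb := aux_beta_pos j n
  have i0 := aux_integrable j ((n : ℝ) + (j : ℝ) + 2) (by linarith)
  have i2 := aux_integrable (j+2) ((n : ℝ) + (j : ℝ) + 2) (by push_cast; linarith)
  have h := setIntegral_mono_on (aux_sq_int j n hn x)
    ((i2.const_mul 2).add (i0.const_mul (2 * x^2))) measurableSet_Ioi (fun s hs => by
      have hs' : (0:ℝ) < s := hs
      have hw : 0 ≤ s ^ j * (1 + s) ^ (-((n : ℝ) + (j : ℝ) + 2)) := by positivity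
      have h2 : (s - x)^2 ≤ 2 * s^2 + 2 * x^2 := by nlinarith [sq_nonneg (s + x)]
      refine (mul_le_mul_of_nonneg_left h2 hw).trans (le_of_eq ?_)
      simp only [Pi.add_apply]
      ring)
  simp only [Pi.add_apply] at h
  rw [integral_add (i2.const_mul 2) (i0.const_mul (2 * x^2)), integral_const_mul,
    integral_const_mul, aux_mass, aux_second j n hn] at h
  rw [div_le_iff₀ hb]
  refine h.trans ?_
  have hq : ((j:ℝ) + 1) * (j + 2) / (n * (n - 1)) ≤ 2 * ((j + 1 : ℕ) : ℝ) ^ 2 := by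
    rw [div_le_iff₀ (by nlinarith)]
    push_cast
    have h1 : (1:ℝ) ≤ n * (n - 1) := by nlinarith
    have h3 : ((j:ℝ) + 1) * (j + 2) ≤ 2 * ((j:ℝ)+1)^2 := by nlinarith
    refine h3.trans (le_mul_of_one_le_right (by positivity) h1)
  nlinarith

lemma aux_term (j n : ℕ) (hn : 2 ≤ n) (x A B : ℝ) (f : ℝ → ℝ) (hfc : ContinuousOn f (Set.Ici 0))
    (hb : ∀ s : ℝ, 0 ≤ s → |f s - f x| ≤ A + B * (s - x) ^ 2) :
    |(∫ s in Set.Ioi (0:ℝ), s ^ j * (1 + s) ^ (-((n : ℝ) + (j : ℝ) + 2)) * f s)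
      / betaB (j + 1) n - f x| ≤ A + B * ((∫ s in Set.Ioi (0:ℝ),
        s ^ j * (1 + s) ^ (-((n : ℝ) + (j : ℝ) + 2)) * (s - x) ^ 2) / betaB (j + 1) n) := by
  have hn' : (2:ℝ) ≤ n := by exact_mod_cast hn
  have hβ := aux_beta_pos j n
  have i0 := aux_integrable j ((n : ℝ) + (j : ℝ) + 2) (by linarith)
  have i2 := aux_sq_int j n hn x
  have hbi := (i0.mul_const A).add (i2.const_mul B)
  have hle : ∀ s ∈ Set.Ioi (0:ℝ),
      ‖s ^ j * (1 + s) ^ (-((n : ℝ) + (j : ℝ) + 2)) * (f s - f x)‖ ≤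
      s ^ j * (1 + s) ^ (-((n : ℝ) + (j : ℝ) + 2)) * A +
        B * (s ^ j * (1 + s) ^ (-((n : ℝ) + (j : ℝ) + 2)) * (s - x) ^ 2) := by
    intro s hs
    have hs' : (0:ℝ) < s := hs
    have hw : 0 ≤ s ^ j * (1 + s) ^ (-((n : ℝ) + (j : ℝ) + 2)) := by positivity
    rw [norm_mul, Real.norm_of_nonneg hw, Real.norm_eq_abs]
    refine (mul_le_mul_of_nonneg_left (hb s hs'.le) hw).trans (le_of_eq ?_)
    ring
  have hae := (ae_restrict_iff' (μ := volume) measurableSet_Ioi).2 (Eventually.of_forall hle)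
  have hd : IntegrableOn (fun s : ℝ =>
      s ^ j * (1 + s) ^ (-((n : ℝ) + (j : ℝ) + 2)) * (f s - f x)) (Set.Ioi 0) := by
    refine Integrable.mono' hbi ?_ hae
    refine i0.aestronglyMeasurable.mul ?_
    refine AEStronglyMeasurable.sub ?_ aestronglyMeasurable_const
    exact (hfc.mono Set.Ioi_subset_Ici_self).aestronglyMeasurable measurableSet_Ioi
  have hnorm := norm_integral_le_of_norm_le hbi hae
  simp only [Pi.add_apply] at hnorm
  rw [integral_add (i0.mul_const A) (i2.const_mul B), integral_mul_const, integral_const_mul,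
    aux_mass] at hnorm
  have hF : ∫ s in Set.Ioi (0:ℝ), s ^ j * (1 + s) ^ (-((n : ℝ) + (j : ℝ) + 2)) * f s
      = (∫ s in Set.Ioi (0:ℝ), s ^ j * (1 + s) ^ (-((n : ℝ) + (j : ℝ) + 2)) * (f s - f x))
        + betaB (j + 1) n * f x := by
    rw [← aux_mass, ← integral_mul_const, ← integral_add hd (i0.mul_const (f x))]
    refine integral_congr_ae (Eventually.of_forall fun s => ?_)
    simp only
    ring
  rw [hF, add_div, mul_div_cancel_left₀ _ hβ.ne', add_sub_cancel_right, abs_div, abs_of_pos hβ,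
    div_le_iff₀ hβ]
  refine hnorm.trans (le_of_eq ?_)
  field_simp

lemma aux_summable (θ : ℕ → ℝ) (hθ : ∀ j, 0 ≤ θ j) (s : ℝ) (hs : 1 < s)
    (h : Summable fun j => θ j * s ^ j) : Summable fun j : ℕ => θ j * (j : ℝ) ^ 2 := by
  have hs0 : 0 < s := by linarith
  have h1 : Summable fun j : ℕ => (j : ℝ) ^ 2 * (s⁻¹) ^ j :=
    summable_pow_mul_geometric_of_norm_lt_one 2 (by
      rw [Real.norm_of_nonneg (by positivity)]; exact inv_lt_one_of_one_lt₀ hs)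
  obtain ⟨C, hC⟩ := h1.tendsto_atTop_zero.bddAbove_range
  refine Summable.of_nonneg_of_le (fun j => mul_nonneg (hθ j) (by positivity)) (fun j => ?_)
    (h.mul_left C)
  have h2 : (j : ℝ) ^ 2 * (s⁻¹) ^ j ≤ C := hC ⟨j, rfl⟩
  have h3 : (j : ℝ) ^ 2 ≤ C * s ^ j := by
    rw [inv_pow] at h2
    rwa [← div_eq_mul_inv, div_le_iff₀ (by positivity)] at h2
  calc θ j * (j : ℝ) ^ 2 ≤ θ j * (C * s ^ j) := mul_le_mul_of_nonneg_left h3 (hθ j)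
    _ = C * (θ j * s ^ j) := by ring

theorem stmt13
    (ρ : ℝ) (hρ : 1 < ρ)
    (ξ S T U V : ℝ → ℝ) (Θ : ℕ → ℝ → ℝ)
    (p q r u v : ℕ → ℝ)
    (hξser : ∀ t : ℝ, HasSum (fun j : ℕ => p j * t ^ j) (ξ t))
    (hξnn : ∀ t : ℝ, 0 ≤ ξ t)
    (hSser : ∀ s ∈ Set.Ioo (-ρ) ρ, HasSum (fun j : ℕ => q j * s ^ j) (S s))
    (hTser : ∀ s ∈ Set.Ioo (-ρ) ρ, HasSum (fun j : ℕ => r j * s ^ (j + 1)) (T s))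
    (hUser : ∀ s ∈ Set.Ioo (-ρ) ρ, HasSum (fun j : ℕ => u j * s ^ (j + 2)) (U s))
    (hVser : ∀ s ∈ Set.Ioo (-ρ) ρ, HasSum (fun j : ℕ => v j * s ^ (j + 3)) (V s))
    (hS1 : 0 < S 1)
    (hT'1 : deriv T 1 = 0) (hT''1 : deriv (deriv T) 1 = 0) (hU'1 : deriv U 1 = 1)
    (hΘnn : ∀ (j : ℕ) (y : ℝ), 0 ≤ y → 0 ≤ Θ j y)
    (hgen : ∀ y : ℝ, 0 ≤ y → ∀ s ∈ Set.Ioo (-ρ) ρ,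
      HasSum (fun j : ℕ => Θ j y * s ^ j) (S s * ξ (y ^ 2 * T s + y * U s + V s)))
    (hξp : ∀ (m : ℕ), 1 ≤ m → ∀ y : ℝ, 0 ≤ y → 0 < ξ (pnx T U V m y))
    (r : ℝ) (hr0 : 0 < r) (hr1 : r ≤ 1)
    (f : ℝ → ℝ) (hfc : ContinuousOn f (Set.Ici 0))
    (hfg : ∃ M σ : ℝ, 0 < M ∧ 0 < σ ∧ ∀ s : ℝ, 0 ≤ s → |f s| ≤ M * (1 + s ^ σ))
    (K : ℝ) (hK : 0 < K)
    (hlip : ∀ x : ℝ, 0 < x → ∀ s : ℝ, 0 ≤ s →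
      |f s - f x| ≤ K * |s - x| ^ r / (s + x) ^ (r / 2))
    (x : ℝ) (hx : 0 < x) (n : ℕ) (hn : 2 ≤ n) :
    |BDop ξ S T U V Θ n f x - f x| ≤
      K / x ^ (r / 2) * (BDop ξ S T U V Θ n (fun t => (t - x) ^ 2) x) ^ (r / 2) := by
  have hn' : (2:ℝ) ≤ n := by exact_mod_cast hn
  set y : ℝ := (n:ℝ) * x with hy
  have hy0 : 0 ≤ y := by positivity
  set Z := S 1 * ξ (pnx T U V n x) with hZdef
  have hZ : 0 < Z := mul_pos hS1 (hξp n (by omega) x hx.le)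
  have hsum1 : HasSum (fun j => Θ j y) Z := by
    have h := hgen y hy0 1 ⟨by linarith, hρ⟩
    simp only [one_pow, mul_one] at h
    rw [hZdef]
    unfold pnx
    rw [show (n:ℝ)^2 * x^2 * T 1 + n * x * U 1 + V 1 = y^2 * T 1 + y * U 1 + V 1 by
      rw [hy]; ring]
    exact h
  have hsum2 : HasSum (fun j => Θ (j+1) y) (Z - Θ 0 y) := by
    have := (hasSum_nat_add_iff' 1).2 hsum1
    simpa using this
  have hmom : Summable fun j : ℕ => Θ j y * (j:ℝ)^2 :=
    aux_summable (fun j => Θ j y) (fun j => hΘnn j y hy0) ((1+ρ)/2) (by linarith)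
      (hgen y hy0 ((1+ρ)/2) ⟨by linarith, by linarith⟩).summable
  have hmom' : Summable fun j : ℕ => Θ (j+1) y * ((j+1:ℕ):ℝ)^2 :=
    (summable_nat_add_iff 1).2 hmom
  set m : ℕ → ℝ := fun j => (∫ s in Set.Ioi (0:ℝ),
        s ^ j * (1 + s) ^ (-((n : ℝ) + (j : ℝ) + 2)) * (s - x) ^ 2) / betaB (j + 1) n with hm
  have hm0 : ∀ j, 0 ≤ m j := by
    intro j
    refine div_nonneg (setIntegral_nonneg measurableSet_Ioi fun s hs => ?_) (aux_beta_pos j n).le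
    have hs' : (0:ℝ) < s := hs
    positivity
  have hmS : Summable fun j => Θ (j+1) y * m j := by
    refine Summable.of_nonneg_of_le (fun j => mul_nonneg (hΘnn _ y hy0) (hm0 j)) (fun j =>
      mul_le_mul_of_nonneg_left (aux_sq_bound j n hn x) (hΘnn _ y hy0)) ?_
    refine ((hsum2.summable.mul_left (2*x^2)).add (hmom'.mul_left 4)).congr fun j => ?_
    ring
  have hBD : ∀ g : ℝ → ℝ, BDop ξ S T U V Θ n g x = Z⁻¹ * (Θ 0 y * g 0 + ∑' j, Θ (j+1) y *
      ((∫ s in Set.Ioi (0:ℝ), s ^ j * (1 + s) ^ (-((n : ℝ) + (j : ℝ) + 2)) * g s)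
        / betaB (j + 1) n)) := by
    intro g
    unfold BDop
    congr 2
    refine tsum_congr fun j => ?_
    ring
  rw [hBD f, hBD (fun t => (t - x)^2)]
  set μ := Z⁻¹ * (Θ 0 y * (fun t => (t - x)^2) (0:ℝ) + ∑' j, Θ (j+1) y * m j) with hμ
  have hμ0 : 0 ≤ μ := by
    refine mul_nonneg (inv_pos.2 hZ).le (add_nonneg (mul_nonneg (hΘnn 0 y hy0) (sq_nonneg _)) ?_)
    exact tsum_nonneg fun j => mul_nonneg (hΘnn _ y hy0) (hm0 j)
  change _ ≤ K / x ^ (r/2) * μ ^ (r/2)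
  have hα0 : 0 < r / 2 := by linarith
  set L := K / x ^ (r/2) with hL
  have hL0 : 0 ≤ L := by positivity
  have main : ∀ ε : ℝ, 0 < ε → |Z⁻¹ * (Θ 0 y * f 0 + ∑' j, Θ (j+1) y *
      ((∫ s in Set.Ioi (0:ℝ), s ^ j * (1 + s) ^ (-((n : ℝ) + (j : ℝ) + 2)) * f s)
        / betaB (j + 1) n)) - f x| ≤ L * (μ + ε) ^ (r/2) := by
    intro ε hε
    set δ := μ + ε with hδ
    have hδ0 : 0 < δ := by linarith
    have hb : ∀ s : ℝ, 0 ≤ s → |f s - f x| ≤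
        L * ((1 - r/2) * δ ^ (r/2)) + L * (r/2 * δ ^ (r/2) / δ) * (s - x)^2 := by
      intro s hs
      have h1 := hlip x hx s hs
      have h2 : K * |s - x| ^ r / (s + x) ^ (r / 2) ≤ K * |s - x| ^ r / x ^ (r/2) := by
        gcongr
        linarith
      have h3 : |s - x| ^ r = ((s - x)^2) ^ (r/2) := by
        rw [← sq_abs, ← Real.rpow_natCast, ← Real.rpow_mul (abs_nonneg _)]
        congr 1; push_cast; ring
      have h4 := aux_tangent (r/2) δ ((s-x)^2) hα0.le (by linarith) hδ0 (sq_nonneg _)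
      calc |f s - f x| ≤ K * |s - x| ^ r / x ^ (r/2) := h1.trans h2
        _ = L * ((s - x)^2) ^ (r/2) := by rw [h3, hL]; ring
        _ ≤ L * ((1 - r/2) * δ ^ (r/2) + r/2 * δ ^ (r/2) / δ * (s-x)^2) :=
          mul_le_mul_of_nonneg_left h4 hL0
        _ = _ := by ring
    have key := aux_sum (fun j => Θ (j+1) y) _ m (Θ 0 y) (f 0) ((0 - x)^2) (f x) _ _ Z
      (fun j => hΘnn _ y hy0) (hΘnn 0 y hy0) hZ hsum2 hmS (hb 0 le_rfl)
      (fun j => aux_term j n hn x _ _ f hfc hb)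
    refine key.trans ?_
    change L * ((1 - r/2) * δ ^ (r/2)) + L * (r/2 * δ ^ (r/2) / δ) * μ ≤ _
    have hμδ : L * (r/2 * δ ^ (r/2) / δ) * μ ≤ L * (r/2 * δ ^ (r/2) / δ) * δ := by
      refine mul_le_mul_of_nonneg_left (by linarith) (by positivity)
    refine (add_le_add le_rfl hμδ).trans (le_of_eq ?_)
    field_simp
    ring
  have hc : Tendsto (fun ε : ℝ => L * (μ + ε) ^ (r/2)) (𝓝[>] 0) (𝓝 (L * μ ^ (r/2))) := by
    have : Continuous (fun ε : ℝ => L * (μ + ε) ^ (r/2)) :=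
      continuous_const.mul ((continuous_const.add continuous_id).rpow_const fun _ => Or.inr hα0.le)
    have h := (this.tendsto 0).mono_left (nhdsWithin_le_nhds (s := Set.Ioi 0))
    simpa using h
  exact ge_of_tendsto hc (by
    filter_upwards [self_mem_nhdsWithin] with ε hε
    exact main ε hε)
end
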